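/- arXiv:1009.4848 — 3 statements merged into one kernel-verified Lean document; each statement's English description precedes it below -/
import Mathlib

section
/- Let N ≥ 1 be an integer and let 0 < a < b and t > 0. Then sup{ σ^{−N/2} e^{−ρ²/(4σ)} : ρ ≥ 0, 0 < σ ≤ t, at ≤ ρ² + σ ≤ bt } = e^{1/4} t^{−N/2} e^{−a/4} if a > 2N, and = e^{1/4} (2N/(at))^{N/2} e^{−N/2} if a ≤ 2N; moreover the supremum is attained. -/
open MeasureTheory Real Set Filter Metric

noncomputable section

abbrev Euc (N : ℕ) := EuclideanSpace ℝ (Fin N)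

/-- Spatial Laplacian of `f : ℝ^N → ℝ`. -/
def lapl {N : ℕ} (f : Euc N → ℝ) (x : Euc N) : ℝ :=
  ∑ i : Fin N,
    fderiv ℝ (fun y => fderiv ℝ f y (EuclideanSpace.single i 1)) x (EuclideanSpace.single i 1)

/-- The capacity `C_{2/q,q'}` of a set `A ⊆ ℝ^N`. -/
def capQ (N : ℕ) (q : ℝ) (A : Set (Euc N)) : ℝ :=
  sInf { c : ℝ | ∃ φ : Euc N → ℝ, ContDiff ℝ (⊤ : ℕ∞) φ ∧ HasCompactSupport φ ∧
      (∃ U : Set (Euc N), IsOpen U ∧ A ⊆ U ∧ ∀ x ∈ U, 1 ≤ φ x) ∧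
      c = (∫ x, φ x ^ (q / (q - 1))) +
          ∫ x, ∫ y, |φ x - φ y| ^ (q / (q - 1)) / ‖x - y‖ ^ ((N : ℝ) + 2 / (q - 1)) }

/-- The spherical shell piece `F_n` of `F` around `x` at time `t`. -/
def shell (N : ℕ) (F : Set (Euc N)) (x : Euc N) (t : ℝ) (n : ℕ) : Set (Euc N) :=
  {y | y ∈ F ∧ Real.sqrt ((n : ℝ) * t) ≤ dist x y ∧ dist x y ≤ Real.sqrt (((n : ℝ) + 1) * t)}

/-- The parabolic capacitary potential `W_F`. -/
def Wpot (N : ℕ) (q : ℝ) (F : Set (Euc N)) (x : Euc N) (t : ℝ) : ℝ :=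
  t ^ (-(N : ℝ) / 2) *
    ∑' n : ℕ,
      Real.sqrt (((n : ℝ) + 1) * t) ^ ((N : ℝ) - 2 / (q - 1)) * Real.exp (-(n : ℝ) / 4) *
        capQ N q ((fun y => (Real.sqrt (((n : ℝ) + 1) * t))⁻¹ • y) '' shell N F x t n)

/-- `u` is a positive solution of `∂ₜu - Δu + u^q = 0` in `Q_∞` whose initial
trace vanishes outside the closed set `F`. -/
def IsSol (N : ℕ) (q : ℝ) (u : Euc N → ℝ → ℝ) (F : Set (Euc N)) : Prop :=
  ContDiffOn ℝ 2 (fun p : Euc N × ℝ => u p.1 p.2) (Set.univ ×ˢ Set.Ioi (0 : ℝ)) ∧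
  (∀ x t, 0 < t → 0 < u x t) ∧
  (∀ x t, 0 < t → deriv (u x) t - lapl (fun y => u y t) x + u x t ^ q = 0) ∧
  (∀ E : Set (Euc N), IsCompact E → E ⊆ Fᶜ →
    Tendsto (fun t => sSup ((fun x => u x t) '' E)) (nhdsWithin 0 (Set.Ioi 0)) (nhds 0))

/-- The heat potential of a function. -/
def heatPot (N : ℕ) (η : Euc N → ℝ) (x : Euc N) (t : ℝ) : ℝ :=
  ∫ y, (4 * π * t) ^ (-(N : ℝ) / 2) * Real.exp (-‖x - y‖ ^ 2 / (4 * t)) * η y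

/-- The heat potential of a measure. -/
def heatPotM (N : ℕ) (μ : Measure (Euc N)) (x : Euc N) (t : ℝ) : ℝ :=
  ∫ y, (4 * π * t) ^ (-(N : ℝ) / 2) * Real.exp (-‖x - y‖ ^ 2 / (4 * t)) ∂μ

/-- The class `𝒯_{r,ρ}(K)` of test functions. -/
def TestFun (N : ℕ) (r ρ : ℝ) (K : Set (Euc N)) (η : Euc N → ℝ) : Prop :=
  ContDiff ℝ (⊤ : ℕ∞) η ∧ HasCompactSupport η ∧ tsupport η ⊆ Metric.ball (0 : Euc N) (r + ρ) ∧
  (∀ x, 0 ≤ η x ∧ η x ≤ 1) ∧ (∀ x ∈ K, η x = 1)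

/-- `‖R[η]‖_{L^{q'}}^{q'} = ∬_{Q_∞} (|∇ℍ[η]|² + |∂ₜℍ[η]|)^{q'} dx dt`. -/
def Rnorm (N : ℕ) (q : ℝ) (η : Euc N → ℝ) : ℝ :=
  ∫ t in Set.Ioi (0 : ℝ), ∫ x,
    (‖fderiv ℝ (fun y => heatPot N η y t) x‖ ^ 2 +
      |deriv (fun τ => heatPot N η x τ) t|) ^ (q / (q - 1))

/-! For fixed `σ` the function decreases in `ρ`, so only the inner boundary `ρ² + σ = a t` matters.
There it equals `e^{1/4} σ^{-N/2} e^{-a t / (4 σ)}`, a function of `σ` alone which increases up to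
`σ = a t / (2 N)` and decreases afterwards; the two cases of the formula record whether this
critical point exceeds `t`. In both cases the maximiser is at most `a t`, hence is attained with a
real `ρ`. -/

/-- The function `σ ↦ σ ^ (-ν) e ^ (-c / σ)`, an unnormalised inverse-gamma density. It is the
Gaussian factor `σ ^ (-N / 2) e ^ (-ρ² / (4 σ))` as a function of time, with `ν = N / 2` and
`c = ρ² / 4`. -/
def invGammaKernel (ν c σ : ℝ) : ℝ :=
  σ ^ (-ν) * Real.exp (-c / σ)

lemma rpow_mul_exp_eq_invGammaKernel (N q σ : ℝ) :
    σ ^ (-N / 2) * Real.exp (-q / (4 * σ)) = invGammaKernel (N / 2) (q / 4) σ := by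
  simp only [invGammaKernel, neg_div, div_div]

lemma antitone_invGammaKernel {σ : ℝ} (hσ : 0 ≤ σ) (ν : ℝ) :
    Antitone fun c => invGammaKernel ν c σ := by
  intro c c' hcc'
  dsimp only [invGammaKernel]
  gcongr

lemma invGammaKernel_sub_mul {σ : ℝ} (hσ : σ ≠ 0) (ν c s : ℝ) :
    invGammaKernel ν (c - s * σ) σ = Real.exp s * invGammaKernel ν c σ := by
  have exponent_eq : -(c - s * σ) / σ = s + -c / σ := by
    field_simp
    ring
  rw [invGammaKernel, invGammaKernel, exponent_eq, Real.exp_add]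
  ring

lemma rpow_le_exp_mul_sub_one {x ν : ℝ} (hx : 0 ≤ x) (hν : 0 ≤ ν) :
    x ^ ν ≤ Real.exp (ν * (x - 1)) :=
  calc x ^ ν ≤ Real.exp (x - 1) ^ ν :=
        rpow_le_rpow hx (by linarith [add_one_le_exp (x - 1)]) hν
    _ = Real.exp (ν * (x - 1)) := by rw [← Real.exp_mul, mul_comm]

lemma invGammaKernel_le_mul_exp {ν σ τ : ℝ} (hν : 0 ≤ ν) (hσ : 0 < σ) (hτ : 0 < τ) (c : ℝ) :
    invGammaKernel ν c σ ≤ invGammaKernel ν c τ * Real.exp ((ν - c / τ) * (τ / σ - 1)) := by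
  have rpow_eq : σ ^ (-ν) = τ ^ (-ν) * (τ / σ) ^ ν := by
    rw [div_rpow hτ.le hσ.le, rpow_neg hσ.le, rpow_neg hτ.le]
    field_simp
  have exponent_eq : ν * (τ / σ - 1) + -c / σ = -c / τ + (ν - c / τ) * (τ / σ - 1) := by
    field_simp
    ring
  calc invGammaKernel ν c σ = τ ^ (-ν) * (τ / σ) ^ ν * Real.exp (-c / σ) := by
        rw [invGammaKernel, rpow_eq]
    _ ≤ τ ^ (-ν) * Real.exp (ν * (τ / σ - 1)) * Real.exp (-c / σ) := by
        gcongr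
        exact rpow_le_exp_mul_sub_one (div_pos hτ hσ).le hν
    _ = invGammaKernel ν c τ * Real.exp ((ν - c / τ) * (τ / σ - 1)) := by
        rw [invGammaKernel, mul_assoc, ← Real.exp_add, exponent_eq, Real.exp_add, mul_assoc]

lemma isMaxOn_invGammaKernel_Ioi {ν c : ℝ} (hν : 0 < ν) (hc : 0 < c) :
    IsMaxOn (invGammaKernel ν c) (Ioi 0) (c / ν) := by
  intro σ hσ
  have h := invGammaKernel_le_mul_exp hν.le hσ (div_pos hc hν) c
  rwa [div_div_cancel₀ hc.ne', sub_self, zero_mul, Real.exp_zero, mul_one] at h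

lemma monotoneOn_invGammaKernel {ν : ℝ} (hν : 0 < ν) (c : ℝ) :
    MonotoneOn (invGammaKernel ν c) (Ioc 0 (c / ν)) := by
  rintro σ ⟨hσ, -⟩ τ ⟨hτ, hτc⟩ hστ
  have slope_nonpos : ν - c / τ ≤ 0 := by
    rw [sub_nonpos, le_div_iff₀ hτ, mul_comm]
    exact (le_div_iff₀ hν).mp hτc
  have ratio_nonneg : 0 ≤ τ / σ - 1 := sub_nonneg.mpr ((one_le_div hσ).mpr hστ)
  calc invGammaKernel ν c σ
      ≤ invGammaKernel ν c τ * Real.exp ((ν - c / τ) * (τ / σ - 1)) :=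
        invGammaKernel_le_mul_exp hν.le hσ hτ c
    _ ≤ invGammaKernel ν c τ :=
        mul_le_of_le_one_right (mul_nonneg (rpow_nonneg hτ.le _) (Real.exp_nonneg _))
          (Real.exp_le_one_iff.mpr (mul_nonpos_of_nonpos_of_nonneg slope_nonpos ratio_nonneg))

lemma isMaxOn_invGammaKernel_Ioc {ν c t : ℝ} (hν : 0 < ν) (ht : t ≤ c / ν) :
    IsMaxOn (invGammaKernel ν c) (Ioc 0 t) t := fun _ hσ =>
  monotoneOn_invGammaKernel hν c ⟨hσ.1, hσ.2.trans ht⟩ ⟨hσ.1.trans_le hσ.2, ht⟩ hσ.2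

lemma isGreatest_of_isMaxOn_invGammaKernel {N m M t σ₀ : ℝ} (hσ₀ : σ₀ ∈ Ioc 0 t) (hσ₀m : σ₀ ≤ m)
    (hmM : m ≤ M) (hmax : IsMaxOn (invGammaKernel (N / 2) (m / 4)) (Ioc 0 t) σ₀) :
    IsGreatest
      {v : ℝ | ∃ ρ σ : ℝ, 0 ≤ ρ ∧ 0 < σ ∧ σ ≤ t ∧ m ≤ ρ ^ 2 + σ ∧ ρ ^ 2 + σ ≤ M ∧
        v = σ ^ (-N / 2) * Real.exp (-ρ ^ 2 / (4 * σ))}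
      (Real.exp (1 / 4) * invGammaKernel (N / 2) (m / 4) σ₀) := by
  have inner_boundary {σ : ℝ} (hσ : 0 < σ) : invGammaKernel (N / 2) ((m - σ) / 4) σ =
      Real.exp (1 / 4) * invGammaKernel (N / 2) (m / 4) σ := by
    rw [← invGammaKernel_sub_mul hσ.ne']
    ring_nf
  simp only [rpow_mul_exp_eq_invGammaKernel]
  constructor
  · have sq_radius : √(m - σ₀) ^ 2 = m - σ₀ := sq_sqrt (sub_nonneg.mpr hσ₀m)
    refine ⟨√(m - σ₀), σ₀, sqrt_nonneg _, hσ₀.1, hσ₀.2, ?_, ?_, ?_⟩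
    · rw [sq_radius, sub_add_cancel]
    · rwa [sq_radius, sub_add_cancel]
    · rw [sq_radius, inner_boundary hσ₀.1]
  · rintro _ ⟨ρ, σ, -, hσ, hσt, hm, -, rfl⟩
    calc invGammaKernel (N / 2) (ρ ^ 2 / 4) σ
        ≤ invGammaKernel (N / 2) ((m - σ) / 4) σ :=
          antitone_invGammaKernel hσ.le _ (by linarith)
      _ = Real.exp (1 / 4) * invGammaKernel (N / 2) (m / 4) σ := inner_boundary hσ
      _ ≤ Real.exp (1 / 4) * invGammaKernel (N / 2) (m / 4) σ₀ := by
          gcongr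
          exact hmax ⟨hσ, hσt⟩

lemma invGammaKernel_mul_self {t : ℝ} (ht : t ≠ 0) (ν c : ℝ) :
    invGammaKernel ν (c * t) t = t ^ (-ν) * Real.exp (-c) := by
  rw [invGammaKernel, neg_div, mul_div_cancel_right₀ c ht]

lemma invGammaKernel_div_self {ν c : ℝ} (hν : 0 ≤ ν) (hc : 0 < c) :
    invGammaKernel ν c (c / ν) = (ν / c) ^ ν * Real.exp (-ν) := by
  rw [invGammaKernel, neg_div, div_div_cancel₀ hc.ne', rpow_neg (div_nonneg hc.le hν),
    ← inv_rpow (div_nonneg hc.le hν), inv_div]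

theorem stmt15_general (N a b t : ℝ) (hN : 1 / 2 ≤ N) (ha : 0 < a) (hab : a ≤ b) (ht : 0 < t) :
    IsGreatest
      {v : ℝ | ∃ ρ σ : ℝ, 0 ≤ ρ ∧ 0 < σ ∧ σ ≤ t ∧
        a * t ≤ ρ ^ 2 + σ ∧ ρ ^ 2 + σ ≤ b * t ∧
        v = σ ^ (-N / 2) * Real.exp (-ρ ^ 2 / (4 * σ))}
      (if 2 * N < a then Real.exp (1 / 4) * t ^ (-N / 2) * Real.exp (-a / 4)
       else Real.exp (1 / 4) * (2 * N / (a * t)) ^ (N / 2) * Real.exp (-N / 2)) := by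
  have half_N_pos : 0 < N / 2 := by linarith
  have c_pos : 0 < a * t / 4 := by positivity
  have inner_le_outer : a * t ≤ b * t := by gcongr
  have critical_eq : a * t / 4 / (N / 2) = a * t / (2 * N) := by
    field_simp
    norm_num
  split_ifs with h
  · have t_le_critical : t ≤ a * t / 4 / (N / 2) := by
      rw [critical_eq, le_div_iff₀ (by linarith)]
      nlinarith
    have t_le_inner : t ≤ a * t := le_mul_of_one_le_left ht.le (by linarith)
    convert isGreatest_of_isMaxOn_invGammaKernel ⟨ht, le_rfl⟩ t_le_inner inner_le_outer
      (isMaxOn_invGammaKernel_Ioc half_N_pos t_le_critical) using 1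
    rw [mul_div_right_comm, invGammaKernel_mul_self ht.ne', neg_div, neg_div, mul_assoc]
  · have critical_mem : a * t / 4 / (N / 2) ∈ Ioc 0 t := by
      refine ⟨div_pos c_pos half_N_pos, ?_⟩
      rw [critical_eq, div_le_iff₀ (by linarith)]
      nlinarith
    have critical_le_inner : a * t / 4 / (N / 2) ≤ a * t := by
      rw [critical_eq]
      exact div_le_self (by positivity) (by linarith)
    convert isGreatest_of_isMaxOn_invGammaKernel critical_mem critical_le_inner inner_le_outer
      ((isMaxOn_invGammaKernel_Ioi half_N_pos c_pos).on_subset Ioc_subset_Ioi_self) using 1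
    rw [invGammaKernel_div_self half_N_pos.le c_pos, ← inv_div (a * t / 4), critical_eq, inv_div,
      neg_div, mul_assoc]

/-- Lemma 3.3: the exact supremum of `σ^{-N/2} e^{-ρ²/(4σ)}` on the region
`{ρ ≥ 0, 0 < σ ≤ t, at ≤ ρ² + σ ≤ bt}`, attained. -/
theorem stmt15 (N : ℕ) (hN : 1 ≤ N) (a b t : ℝ) (ha : 0 < a) (hab : a < b) (ht : 0 < t) :
    IsGreatest
      {v : ℝ | ∃ ρ σ : ℝ, 0 ≤ ρ ∧ 0 < σ ∧ σ ≤ t ∧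
        a * t ≤ ρ ^ 2 + σ ∧ ρ ^ 2 + σ ≤ b * t ∧
        v = σ ^ (-(N : ℝ) / 2) * Real.exp (-ρ ^ 2 / (4 * σ))}
      (if 2 * (N : ℝ) < a then Real.exp (1 / 4) * t ^ (-(N : ℝ) / 2) * Real.exp (-a / 4)
       else Real.exp (1 / 4) * (2 * (N : ℝ) / (a * t)) ^ ((N : ℝ) / 2) *
              Real.exp (-(N : ℝ) / 2)) := by
  have one_le_N : (1 : ℝ) ≤ N := by exact_mod_cast hN
  exact stmt15_general N a b t (by linarith) ha hab.le ht

end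
end

section
/- Let a > 0, b ∈ ℝ and κ > 0. Then there exists a constant C = C(a,b,κ) > 0 such that for all A > 0 and all B > κ/A: ∫_0^1 (1−x)^{−a} x^{−b} e^{−A²/(4(1−x))} e^{−B²/(4x)} dx ≤ C e^{−(A+B)²/4} A^{1−a} B^{1−b} (A+B)^{a+b−2}. -/
open MeasureTheory Real Set Filter Metric

noncomputable section

/-!
Substitute `x = B y / (A + B y)`, which places the saddle point `x = B / (A + B)` of the exponent at
`y = 1`: the exponent becomes exactly `-(A + B)² / 4 - (A B / 4) (y - 1)² / y`. Since
`A B ≥ κ`, the second term is at most `-(κ / 4) (y - 1)² / y`, and the one remaining factor that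
mixes `y` with `A` and `B`, a power of `A + B y`, is controlled by `A + B y` lying between `A + B`
and `(A + B) y`. What is left are convergent integrals depending only on `a`, `b` and `κ`.
-/

/-- The weight `y ^ p * exp (-k (y - 1)² / y)` on `(0, ∞)`. For `k > 0` its integral is
`2 e ^ (2 k) K_{p+1}(2 k)` with `K` the modified Bessel function of the second kind; the square is
completed in the exponent so that the weight decreases in `k`. -/
def besselWeight (p k y : ℝ) : ℝ := y ^ p * exp (-(k * ((y - 1) ^ 2 / y)))

/-- The Möbius map `y ↦ B y / (A + B y)` from `(0, ∞)` onto `(0, 1)`, normalized to send `1` to the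
maximum point `B / (A + B)` of `x ↦ -A ^ 2 / (1 - x) - B ^ 2 / x`. -/
def saddleMap (A B y : ℝ) : ℝ := B * y / (A + B * y)

section BesselWeight

variable {p q k l y : ℝ}

lemma exp_neg_div_le_factorial_div_pow_mul_pow (hk : 0 < k) (hy : 0 < y) (n : ℕ) :
    exp (-(k / y)) ≤ n.factorial / k ^ n * y ^ n := by
  calc exp (-(k / y)) = (exp (k / y))⁻¹ := exp_neg _
    _ ≤ ((k / y) ^ n / n.factorial)⁻¹ :=
        inv_anti₀ (by positivity) (pow_div_factorial_le_exp _ (by positivity) n)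
    _ = n.factorial / k ^ n * y ^ n := by rw [div_pow]; field_simp

lemma integrableOn_rpow_mul_exp_neg_mul_mul_exp_neg_div (p : ℝ) (hk : 0 < k) (hl : 0 < l) :
    IntegrableOn (fun y : ℝ => y ^ p * (exp (-k * y) * exp (-(l / y)))) (Ioi 0) := by
  obtain ⟨n, hn⟩ := exists_nat_gt (-1 - p)
  have gamma_integrable : IntegrableOn (fun y : ℝ => y ^ (p + n) * exp (-k * y)) (Ioi 0) := by
    simpa only [rpow_one] using
      integrableOn_rpow_mul_exp_neg_mul_rpow (p := 1) (by linarith) one_pos hk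
  refine (gamma_integrable.const_mul (n.factorial / l ^ n)).mono'
    (Measurable.aestronglyMeasurable (by fun_prop)) ?_
  refine ae_restrict_of_forall_mem measurableSet_Ioi fun y (hy : 0 < y) => ?_
  rw [norm_of_nonneg (by positivity)]
  calc y ^ p * (exp (-k * y) * exp (-(l / y)))
      ≤ y ^ p * (exp (-k * y) * (n.factorial / l ^ n * y ^ n)) := by
        gcongr; exact exp_neg_div_le_factorial_div_pow_mul_pow hl hy n
    _ = n.factorial / l ^ n * (y ^ (p + n) * exp (-k * y)) := by
        rw [rpow_add hy, rpow_natCast]; ring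

lemma besselWeight_eq_exp_mul (hy : y ≠ 0) :
    besselWeight p k y = exp (2 * k) * (y ^ p * (exp (-k * y) * exp (-(k / y)))) := by
  have exponent_eq : -(k * ((y - 1) ^ 2 / y)) = 2 * k + (-k * y + -(k / y)) := by
    field_simp; ring
  rw [besselWeight, exponent_eq, exp_add, exp_add]
  ring

lemma integrableOn_besselWeight (p : ℝ) (hk : 0 < k) :
    IntegrableOn (besselWeight p k) (Ioi 0) :=
  IntegrableOn.congr_fun
    ((integrableOn_rpow_mul_exp_neg_mul_mul_exp_neg_div p hk hk).const_mul (exp (2 * k)))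
    (fun _ hy => (besselWeight_eq_exp_mul (ne_of_gt hy)).symm) measurableSet_Ioi

lemma besselWeight_pos (hy : 0 < y) : 0 < besselWeight p k y := by
  unfold besselWeight; positivity

lemma besselWeight_antitone (hy : 0 < y) : Antitone fun k => besselWeight p k y := by
  intro k l hkl
  simp only [besselWeight]
  gcongr

lemma rpow_mul_besselWeight (hy : 0 < y) :
    y ^ q * besselWeight p k y = besselWeight (p + q) k y := by
  rw [besselWeight, besselWeight, rpow_add hy]; ring

lemma integral_besselWeight_pos (p : ℝ) (hk : 0 < k) :
    0 < ∫ y in Ioi 0, besselWeight p k y := by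
  refine (setIntegral_pos_iff_support_of_nonneg_ae
    (ae_restrict_of_forall_mem measurableSet_Ioi fun y hy => (besselWeight_pos hy).le)
    (integrableOn_besselWeight p hk)).2 ?_
  have support_inter : Function.support (besselWeight p k) ∩ Ioi 0 = Ioi 0 :=
    inter_eq_right.2 fun y hy => (besselWeight_pos hy).ne'
  simp [support_inter]

end BesselWeight

section PowerBounds

variable {A B c k l s t x y : ℝ}

lemma rpow_le_rpow_add_rpow_of_mem_uIcc (hs : 0 < s) (ht : 0 < t) (hx : x ∈ uIcc s t) (c : ℝ) :
    x ^ c ≤ s ^ c + t ^ c := by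
  have uIcc_subset_Ioi : uIcc s t ⊆ Ioi 0 := ordConnected_Ioi.uIcc_subset hs ht
  have rpow_mem : x ^ c ∈ uIcc (s ^ c) (t ^ c) := by
    rcases le_total 0 c with hc | hc
    · exact ((monotoneOn_rpow_Ici_of_exponent_nonneg hc).mono
        (uIcc_subset_Ioi.trans Ioi_subset_Ici_self)).mapsTo_uIcc hx
    · exact ((antitoneOn_rpow_Ioi_of_exponent_nonpos hc).mono uIcc_subset_Ioi).mapsTo_uIcc hx
  calc x ^ c ≤ max (s ^ c) (t ^ c) := rpow_mem.2
    _ ≤ s ^ c + t ^ c := max_le_add_of_nonneg (by positivity) (by positivity)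

lemma add_mul_rpow_le (hA : 0 < A) (hB : 0 < B) (hy : 0 < y) (c : ℝ) :
    (A + B * y) ^ c ≤ (A + B) ^ c * (1 + y ^ c) := by
  have mem_uIcc_endpoints : A + B * y ∈ uIcc (A + B) ((A + B) * y) := by
    rcases le_total 1 y with h | h
    · exact mem_uIcc_of_le (by nlinarith) (by nlinarith)
    · exact mem_uIcc_of_ge (by nlinarith) (by nlinarith)
  calc (A + B * y) ^ c ≤ (A + B) ^ c + ((A + B) * y) ^ c :=
        rpow_le_rpow_add_rpow_of_mem_uIcc (by positivity) (by positivity) mem_uIcc_endpoints c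
    _ = (A + B) ^ c * (1 + y ^ c) := by rw [mul_rpow (by positivity) hy.le]; ring

lemma integral_add_mul_rpow_mul_besselWeight_le (hA : 0 < A) (hB : 0 < B) (hk : 0 < k)
    (hkl : k ≤ l) (p c : ℝ) :
    ∫ y in Ioi 0, (A + B * y) ^ c * besselWeight p l y ≤
      (A + B) ^ c *
        ((∫ y in Ioi 0, besselWeight p k y) + ∫ y in Ioi 0, besselWeight (p + c) k y) := by
  have integrable_left := integrableOn_besselWeight p hk
  have integrable_right := integrableOn_besselWeight (p + c) hk
  rw [← integral_add integrable_left integrable_right, ← integral_const_mul]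
  refine integral_mono_of_nonneg ?_ ((integrable_left.add integrable_right).const_mul _) ?_ <;>
    refine ae_restrict_of_forall_mem measurableSet_Ioi fun y (hy : 0 < y) => ?_
  · exact mul_nonneg (by positivity) (besselWeight_pos hy).le
  calc (A + B * y) ^ c * besselWeight p l y
      ≤ ((A + B) ^ c * (1 + y ^ c)) * besselWeight p k y :=
        mul_le_mul (add_mul_rpow_le hA hB hy c) (besselWeight_antitone hy hkl)
          (besselWeight_pos hy).le (by positivity)
    _ = (A + B) ^ c * (besselWeight p k y + besselWeight (p + c) k y) := by
        rw [← rpow_mul_besselWeight hy]; ring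

end PowerBounds

section ChangeOfVariables

variable {A B y : ℝ}

lemma one_sub_saddleMap (h : A + B * y ≠ 0) : 1 - saddleMap A B y = A / (A + B * y) := by
  rw [saddleMap]; field_simp; ring

lemma bijOn_saddleMap (hA : 0 < A) (hB : 0 < B) :
    BijOn (saddleMap A B) (Ioi 0) (Ioo 0 1) := by
  have invOn : InvOn (fun x => A * x / (B * (1 - x))) (saddleMap A B) (Ioi 0) (Ioo 0 1) := by
    constructor
    · intro y (hy : 0 < y)
      have hD : A + B * y ≠ 0 := by positivity
      simp only [one_sub_saddleMap hD]
      rw [saddleMap]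
      field_simp
    · rintro x ⟨-, hx⟩
      have hx' : 1 - x ≠ 0 := (sub_pos.2 hx).ne'
      have denominator_eq : A + B * (A * x / (B * (1 - x))) = A / (1 - x) := by field_simp; ring
      simp only [saddleMap, denominator_eq]
      field_simp
  refine invOn.bijOn (fun y (hy : 0 < y) => ⟨?_, ?_⟩) fun x ⟨hx₀, hx₁⟩ => ?_
  · unfold saddleMap; positivity
  · rw [← sub_pos, one_sub_saddleMap (by positivity)]; positivity
  · have := sub_pos.2 hx₁
    exact mem_Ioi.2 (by positivity)

lemma hasDerivAt_saddleMap (h : A + B * y ≠ 0) :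
    HasDerivAt (saddleMap A B) (A * B / (A + B * y) ^ 2) y := by
  have linear : HasDerivAt (fun y => B * y) B y := by
    simpa using (hasDerivAt_id y).const_mul B
  exact (linear.div (linear.const_add A) h).congr_deriv (by ring)

lemma integral_Ioo_zero_one_eq_integral_Ioi {E : Type*} [NormedAddCommGroup E] [NormedSpace ℝ E]
    (hA : 0 < A) (hB : 0 < B) (f : ℝ → E) :
    ∫ x in Ioo 0 1, f x =
      ∫ y in Ioi 0, (A * B / (A + B * y) ^ 2) • f (saddleMap A B y) := by
  have bijOn := bijOn_saddleMap hA hB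
  rw [← bijOn.image_eq, integral_image_eq_integral_abs_deriv_smul measurableSet_Ioi
    (fun y (hy : 0 < y) => (hasDerivAt_saddleMap (by positivity)).hasDerivWithinAt) bijOn.injOn]
  refine setIntegral_congr_fun measurableSet_Ioi fun y (hy : 0 < y) => ?_
  rw [abs_of_pos (by positivity)]

lemma deriv_saddleMap_mul_rpow_mul_rpow (hA : 0 < A) (hB : 0 < B) (hy : 0 < y) (a b : ℝ) :
    A * B / (A + B * y) ^ 2 * ((1 - saddleMap A B y) ^ (-a) * saddleMap A B y ^ (-b)) =
      A ^ (1 - a) * B ^ (1 - b) * ((A + B * y) ^ (a + b - 2) * y ^ (-b)) := by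
  have hD : 0 < A + B * y := by positivity
  rw [one_sub_saddleMap hD.ne', saddleMap]
  generalize A + B * y = D at hD
  rw [div_rpow hA.le hD.le, div_rpow (by positivity) hD.le, mul_rpow hB.le hy.le,
    rpow_sub hA, rpow_sub hB, rpow_sub hD, rpow_add hD, rpow_one, rpow_one, rpow_two,
    rpow_neg hA.le, rpow_neg hB.le, rpow_neg hD.le, rpow_neg hD.le]
  field_simp

lemma exp_mul_exp_saddleMap (hy : y ≠ 0) (hD : A + B * y ≠ 0) :
    exp (-A ^ 2 / (4 * (1 - saddleMap A B y))) * exp (-B ^ 2 / (4 * saddleMap A B y)) =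
      exp (-(A + B) ^ 2 / 4) * exp (-(A * B / 4 * ((y - 1) ^ 2 / y))) := by
  rw [one_sub_saddleMap hD, saddleMap, ← exp_add, ← exp_add]
  congr 1
  field_simp
  ring

lemma integral_rpow_mul_exp_eq_integral_besselWeight (hA : 0 < A) (hB : 0 < B) (a b : ℝ) :
    ∫ x in Ioo (0 : ℝ) 1, (1 - x) ^ (-a) * x ^ (-b) *
        exp (-A ^ 2 / (4 * (1 - x))) * exp (-B ^ 2 / (4 * x)) =
      exp (-(A + B) ^ 2 / 4) * A ^ (1 - a) * B ^ (1 - b) *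
        ∫ y in Ioi 0, (A + B * y) ^ (a + b - 2) * besselWeight (-b) (A * B / 4) y := by
  rw [integral_Ioo_zero_one_eq_integral_Ioi hA hB, ← integral_const_mul]
  refine setIntegral_congr_fun measurableSet_Ioi fun y (hy : 0 < y) => ?_
  have hD : A + B * y ≠ 0 := by positivity
  simp only [smul_eq_mul, besselWeight]
  linear_combination
    exp (-A ^ 2 / (4 * (1 - saddleMap A B y))) * exp (-B ^ 2 / (4 * saddleMap A B y)) *
        deriv_saddleMap_mul_rpow_mul_rpow hA hB hy a b +
      A ^ (1 - a) * B ^ (1 - b) * ((A + B * y) ^ (a + b - 2) * y ^ (-b)) *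
        exp_mul_exp_saddleMap hy.ne' hD

end ChangeOfVariables

theorem stmt17_general (a b κ : ℝ) (hκ : 0 < κ) :
    ∃ C : ℝ, 0 < C ∧
      ∀ A B : ℝ, 0 < A → κ / A < B →
        (∫ x in Set.Ioo (0 : ℝ) 1,
            (1 - x) ^ (-a) * x ^ (-b) *
              Real.exp (-A ^ 2 / (4 * (1 - x))) * Real.exp (-B ^ 2 / (4 * x))) ≤
          C * Real.exp (-(A + B) ^ 2 / 4) * A ^ (1 - a) * B ^ (1 - b) *
            (A + B) ^ (a + b - 2) := by
  set c := a + b - 2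
  have hκ4 : 0 < κ / 4 := by positivity
  refine ⟨(∫ y in Ioi 0, besselWeight (-b) (κ / 4) y) +
      ∫ y in Ioi 0, besselWeight (-b + c) (κ / 4) y,
    add_pos (integral_besselWeight_pos _ hκ4) (integral_besselWeight_pos _ hκ4),
    fun A B hA hAB => ?_⟩
  have hB : 0 < B := (div_pos hκ hA).trans hAB
  have hκAB : κ / 4 ≤ A * B / 4 := by
    gcongr; exact ((div_lt_iff₀' hA).1 hAB).le
  rw [integral_rpow_mul_exp_eq_integral_besselWeight hA hB]
  refine (mul_le_mul_of_nonneg_left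
    (integral_add_mul_rpow_mul_besselWeight_le hA hB hκ4 hκAB (-b) c)
    (by positivity)).trans_eq ?_
  ring

/-- Lemma A.1: sharp two-parameter integral inequality. -/
theorem stmt17 (a b κ : ℝ) (ha : 0 < a) (hκ : 0 < κ) :
    ∃ C : ℝ, 0 < C ∧
      ∀ A B : ℝ, 0 < A → κ / A < B →
        (∫ x in Set.Ioo (0 : ℝ) 1,
            (1 - x) ^ (-a) * x ^ (-b) *
              Real.exp (-A ^ 2 / (4 * (1 - x))) * Real.exp (-B ^ 2 / (4 * x))) ≤
          C * Real.exp (-(A + B) ^ 2 / 4) * A ^ (1 - a) * B ^ (1 - b) *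
            (A + B) ^ (a + b - 2) :=
  stmt17_general a b κ hκ

end
end

section
/- Let α, β, γ, δ be real numbers with γ > 1 and δ > 0, and let ℓ ≥ 2 be an integer. Then there exists a constant C > 0, depending only on α, β, γ, δ and ℓ, such that for every integer n > ℓ: Σ_{p=1}^{n−ℓ} p^α (√n − √p)^β e^{−δ(√p + √γ(√n − √(p+1)))²} ≤ C n^{α−β/2} e^{−δ n}. -/
open MeasureTheory Real Set Filter Metric

noncomputable section

/-
Put `k = n - p`. Since `√n - √p` is comparable to `k / √n`, and `p / n` lies between `1 / (1 + k)`
and `1`, the power factors cost only a polynomial in `k` relative to `n ^ (α - β / 2)`. In the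
exponent write `s = √γ`: the square of `√(p + 1) + s * (√n - √(p + 1))` exceeds `n` by at least
`(s - 1) * (k - 1)`, and replacing the first `√(p + 1)` by `√p` loses only `O(1 + √k)`, which half
of that gain absorbs up to a constant. So, relative to `n ^ (α - β / 2) * exp (-δ * n)`, the `p`-th
term is at most a polynomial in `k` times a decaying exponential in `k`, which is summable.
-/

lemma rpow_le_rpow_abs_of_inv_le {x y : ℝ} (hy : 0 < y) (hyx : y⁻¹ ≤ x) (hxy : x ≤ y) (e : ℝ) :
    x ^ e ≤ y ^ |e| := by
  have hx : 0 < x := (inv_pos.mpr hy).trans_le hyx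
  rcases le_total 0 e with he | he
  · rw [abs_of_nonneg he]
    exact rpow_le_rpow hx.le hxy he
  · rw [abs_of_nonpos he, ← inv_inv x, inv_rpow (inv_pos.mpr hx).le, ← rpow_neg (by positivity)]
    exact rpow_le_rpow (by positivity) (inv_le_of_inv_le₀ hy hyx) (neg_nonneg.mpr he)

lemma rpow_le_rpow_mul_one_add_sub_rpow_abs {x y : ℝ} (hx : 1 ≤ x) (hxy : x ≤ y) (e : ℝ) :
    x ^ e ≤ y ^ e * (1 + (y - x)) ^ |e| := by
  have hx₀ : 0 < x := by linarith
  have hy₀ : 0 < y := by linarith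
  have h_lower : (1 + (y - x))⁻¹ ≤ x / y := by
    rw [inv_le_comm₀ (by linarith) (by positivity), inv_div, div_le_iff₀ hx₀]
    nlinarith
  have h_upper : x / y ≤ 1 + (y - x) := (div_le_one_of_le₀ hxy hy₀.le).trans (by linarith)
  calc x ^ e = y ^ e * (x / y) ^ e := by
        rw [← mul_rpow hy₀.le (by positivity), mul_div_cancel₀ _ hy₀.ne']
    _ ≤ y ^ e * (1 + (y - x)) ^ |e| := by
        gcongr
        exact rpow_le_rpow_abs_of_inv_le (by linarith) h_lower h_upper e

lemma sqrt_sub_sqrt_mul_sqrt_add_sqrt {x y : ℝ} (hx : 0 ≤ x) (hy : 0 ≤ y) :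
    (√y - √x) * (√y + √x) = y - x := by
  linear_combination sq_sqrt hy - sq_sqrt hx

lemma sqrt_sub_sqrt_rpow_le {x y : ℝ} (hx : 0 ≤ x) (hxy : x + 1 ≤ y) (e : ℝ) :
    (√y - √x) ^ e ≤ y ^ (-(e / 2)) * (1 + (y - x)) ^ |e| := by
  have hy : 0 < y := by linarith
  have hsub : 0 ≤ √y - √x := sub_nonneg.mpr (by gcongr; linarith)
  have hprod := sqrt_sub_sqrt_mul_sqrt_add_sqrt hx hy.le
  have h_upper : √y * (√y - √x) ≤ 1 + (y - x) := by nlinarith [sqrt_nonneg x]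
  have h_lower : (1 + (y - x))⁻¹ ≤ √y * (√y - √x) := by
    calc (1 + (y - x))⁻¹ ≤ 1 / 2 := by
          rw [inv_le_comm₀ (by linarith) (by norm_num)]; linarith
      _ ≤ √y * (√y - √x) := by nlinarith
  have hpow : y ^ (-(e / 2)) = √y ^ (-e) := by
    rw [sqrt_eq_rpow, ← rpow_mul hy.le]
    ring_nf
  calc (√y - √x) ^ e = √y ^ (-e) * (√y * (√y - √x)) ^ e := by
        rw [mul_rpow (sqrt_nonneg y) hsub, ← mul_assoc, ← rpow_add (sqrt_pos.mpr hy),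
          neg_add_cancel, rpow_zero, one_mul]
    _ ≤ y ^ (-(e / 2)) * (1 + (y - x)) ^ |e| := by
        rw [hpow]
        gcongr
        exact rpow_le_rpow_abs_of_inv_le (by linarith) h_lower h_upper e

lemma add_mul_sub_le_sq_sqrt_add_mul {x y s : ℝ} (hx : 0 ≤ x) (hy : 0 ≤ y) (hs : 1 ≤ s) :
    y + (s - 1) * (y - x) ≤ (√x + s * (√y - √x)) ^ 2 := by
  have hextra : 0 ≤ s * (s - 1) * (√y - √x) ^ 2 :=
    mul_nonneg (mul_nonneg (by linarith) (sub_nonneg.mpr hs)) (sq_nonneg _)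
  calc y + (s - 1) * (y - x)
      ≤ y + (s - 1) * (y - x) + s * (s - 1) * (√y - √x) ^ 2 := le_add_of_nonneg_right hextra
    _ = (√x + s * (√y - √x)) ^ 2 := by
        linear_combination (s - 1) * sq_sqrt hx - s * sq_sqrt hy

lemma sq_sqrt_add_one_add_sub_le_sq_sqrt_add {x t : ℝ} (hx : 0 ≤ x) (ht : 0 ≤ t) :
    (√(x + 1) + t) ^ 2 - 2 * (1 + t) ≤ (√x + t) ^ 2 := by
  have hone : 1 ≤ √(x + 1) := one_le_sqrt.mpr (by linarith)
  have hprod := sqrt_sub_sqrt_mul_sqrt_add_sqrt hx (by linarith : 0 ≤ x + 1)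
  have hmono : √x ≤ √(x + 1) := by gcongr; linarith
  have hgap_mul : (√(x + 1) - √x) * √(x + 1) ≤ 1 := by nlinarith [sqrt_nonneg x]
  have hgap_le : √(x + 1) - √x ≤ 1 := by nlinarith
  have hgap_mul_t : (√(x + 1) - √x) * t ≤ t := mul_le_of_le_one_left ht hgap_le
  calc (√(x + 1) + t) ^ 2 - 2 * (1 + t)
      ≤ (√(x + 1) + t) ^ 2 - 2 * (√(x + 1) - √x) * (√(x + 1) + t) := by linarith
    _ = (√x + t) ^ 2 - (√(x + 1) - √x) ^ 2 := by ring
    _ ≤ (√x + t) ^ 2 := sub_le_self _ (sq_nonneg _)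

lemma add_half_sub_one_mul_sub_le_sq_sqrt_add_mul {x y s : ℝ} (hx : 0 ≤ x) (hxy : x + 1 ≤ y)
    (hs : 1 < s) :
    y + (s - 1) / 2 * (y - x) - 3 * (s ^ 2 / (s - 1)) ≤ (√x + s * (√y - √(x + 1))) ^ 2 := by
  have hs' : 0 < s - 1 := sub_pos.mpr hs
  have hv : 0 ≤ √y - √(x + 1) := sub_nonneg.mpr (by gcongr)
  have hv_sq : (√y - √(x + 1)) ^ 2 ≤ y - (x + 1) := by
    have := sqrt_sub_sqrt_mul_sqrt_add_sqrt (by linarith : 0 ≤ x + 1) (by linarith : 0 ≤ y)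
    nlinarith [sqrt_nonneg (x + 1)]
  have hconst : (s - 1) / 2 + 2 ≤ s ^ 2 / (s - 1) := by
    rw [le_div_iff₀ hs']
    nlinarith [sq_nonneg (s - 2)]
  have hgain := add_mul_sub_le_sq_sqrt_add_mul (by linarith : 0 ≤ x + 1) (by linarith : 0 ≤ y) hs.le
  have hloss := sq_sqrt_add_one_add_sub_le_sq_sqrt_add hx (by positivity : 0 ≤ s * (√y - √(x + 1)))
  have hyoung : 2 * (√y - √(x + 1)) * s ≤
      (s - 1) / 2 * (√y - √(x + 1)) ^ 2 + 2 * (s ^ 2 / (s - 1)) := by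
    calc _ ≤ _ := two_mul_le_add_mul_sq (half_pos hs')
      _ = _ := by field_simp
  have habsorb : (s - 1) / 2 * (√y - √(x + 1)) ^ 2 ≤ (s - 1) / 2 * (y - (x + 1)) := by gcongr
  linarith

lemma rpow_mul_sqrt_sub_sqrt_rpow_le {x y : ℝ} (hx : 1 ≤ x) (hxy : x + 1 ≤ y) (α β : ℝ) :
    x ^ α * (√y - √x) ^ β ≤ y ^ (α - β / 2) * (1 + (y - x)) ^ (|α| + |β|) := by
  have hsub : 0 ≤ √y - √x := sub_nonneg.mpr (by gcongr; linarith)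
  have hy : 0 < y := by linarith
  have hone_add : 0 < 1 + (y - x) := by linarith
  calc x ^ α * (√y - √x) ^ β
      ≤ (y ^ α * (1 + (y - x)) ^ |α|) * (y ^ (-(β / 2)) * (1 + (y - x)) ^ |β|) := by
        gcongr
        · exact rpow_le_rpow_mul_one_add_sub_rpow_abs hx (by linarith) α
        · exact sqrt_sub_sqrt_rpow_le (by linarith) hxy β
    _ = y ^ (α - β / 2) * (1 + (y - x)) ^ (|α| + |β|) := by
        rw [sub_eq_add_neg α, rpow_add hy, rpow_add hone_add]
        ring

lemma exp_neg_mul_sq_sqrt_add_mul_le {x y s δ : ℝ} (hx : 0 ≤ x) (hxy : x + 1 ≤ y) (hs : 1 < s)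
    (hδ : 0 ≤ δ) :
    exp (-δ * (√x + s * (√y - √(x + 1))) ^ 2) ≤
      exp (3 * δ * (s ^ 2 / (s - 1))) * exp (-δ * y) * exp (-(δ * ((s - 1) / 2)) * (y - x)) := by
  rw [← exp_add, ← exp_add]
  gcongr
  linarith [mul_le_mul_of_nonneg_left (add_half_sub_one_mul_sub_le_sq_sqrt_add_mul hx hxy hs) hδ]

lemma rpow_mul_sqrt_sub_sqrt_rpow_mul_exp_le {x y s δ : ℝ} (hx : 1 ≤ x) (hxy : x + 1 ≤ y)
    (hs : 1 < s) (hδ : 0 ≤ δ) (α β : ℝ) :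
    x ^ α * (√y - √x) ^ β * exp (-δ * (√x + s * (√y - √(x + 1))) ^ 2) ≤
      exp (3 * δ * (s ^ 2 / (s - 1))) * y ^ (α - β / 2) * exp (-δ * y) *
        ((1 + (y - x)) ^ (|α| + |β|) * exp (-(δ * ((s - 1) / 2)) * (y - x))) := by
  have hy : 0 ≤ y := by linarith
  have hone_add : 0 ≤ 1 + (y - x) := by linarith
  calc x ^ α * (√y - √x) ^ β * exp (-δ * (√x + s * (√y - √(x + 1))) ^ 2)
      ≤ (y ^ (α - β / 2) * (1 + (y - x)) ^ (|α| + |β|)) *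
          (exp (3 * δ * (s ^ 2 / (s - 1))) * exp (-δ * y) *
            exp (-(δ * ((s - 1) / 2)) * (y - x))) :=
        mul_le_mul (rpow_mul_sqrt_sub_sqrt_rpow_le hx hxy α β)
          (exp_neg_mul_sq_sqrt_add_mul_le (by linarith) hxy hs hδ) (exp_pos _).le (by positivity)
    _ = _ := by ring

lemma summable_one_add_rpow_mul_exp_neg_mul (c : ℝ) {r : ℝ} (hr : 0 < r) :
    Summable fun k : ℕ ↦ (1 + k : ℝ) ^ c * exp (-r * k) := by
  have hpow : Summable fun k : ℕ ↦ exp r * (((k + 1 : ℕ) : ℝ) ^ ⌈c⌉₊ * exp (-r * (k + 1 : ℕ))) :=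
    ((summable_nat_add_iff 1).mpr (summable_pow_mul_exp_neg_nat_mul ⌈c⌉₊ hr)).mul_left _
  refine hpow.of_nonneg_of_le (fun k ↦ by positivity) fun k ↦ ?_
  calc (1 + k : ℝ) ^ c * exp (-r * k) ≤ (1 + k : ℝ) ^ (⌈c⌉₊ : ℝ) * exp (-r * k) := by
        gcongr
        · linarith [k.cast_nonneg (α := ℝ)]
        · exact Nat.le_ceil c
    _ = exp r * (((k + 1 : ℕ) : ℝ) ^ ⌈c⌉₊ * exp (-r * (k + 1 : ℕ))) := by
        rw [rpow_natCast, mul_left_comm, ← exp_add]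
        push_cast
        ring_nf

lemma sum_Icc_one_sub_le_tsum {g : ℕ → ℝ} (hg : Summable g) (hg₀ : ∀ k, 0 ≤ g k) {m n : ℕ}
    (hmn : m ≤ n) : ∑ p ∈ Finset.Icc 1 m, g (n - p) ≤ ∑' k, g k := by
  rw [← Finset.Ico_add_one_right_eq_Icc, Finset.sum_Ico_reflect g 1 (by omega)]
  exact hg.sum_le_tsum _ fun k _ ↦ hg₀ k

theorem stmt18_general (α β γ δ : ℝ) (hγ : 1 < γ) (hδ : 0 < δ) :
    ∃ C : ℝ, 0 < C ∧
      ∀ m n : ℕ, m < n →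
        (∑ p ∈ Finset.Icc 1 m,
            (p : ℝ) ^ α * (√n - √p) ^ β *
              exp (-δ * (√p + √γ * (√n - √((p : ℝ) + 1))) ^ 2)) ≤
          C * (n : ℝ) ^ (α - β / 2) * exp (-δ * n) := by
  have hs : 1 < √γ := lt_sqrt_of_sq_lt (by simpa using hγ)
  set K : ℝ := exp (3 * δ * (√γ ^ 2 / (√γ - 1)))
  set g : ℕ → ℝ := fun k ↦ (1 + k : ℝ) ^ (|α| + |β|) * exp (-(δ * ((√γ - 1) / 2)) * k)
  have hg : Summable g := summable_one_add_rpow_mul_exp_neg_mul _ (mul_pos hδ (by linarith))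
  have hg_pos (k : ℕ) : 0 < g k := by positivity
  have hg_tsum : 0 < ∑' k, g k := hg.tsum_pos (fun k ↦ (hg_pos k).le) 0 (hg_pos 0)
  refine ⟨K * ∑' k, g k, by positivity, fun m n hmn ↦ ?_⟩
  calc _ ≤ ∑ p ∈ Finset.Icc 1 m, K * (n : ℝ) ^ (α - β / 2) * exp (-δ * n) * g (n - p) := by
        refine Finset.sum_le_sum fun p hp ↦ ?_
        obtain ⟨hp, hpm⟩ := Finset.mem_Icc.mp hp
        have hpn : p + 1 ≤ n := by omega
        simpa only [g, Nat.cast_sub (Nat.le_of_succ_le hpn)] using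
          rpow_mul_sqrt_sub_sqrt_rpow_mul_exp_le (by exact_mod_cast hp) (by exact_mod_cast hpn)
            hs hδ.le α β
    _ ≤ K * (n : ℝ) ^ (α - β / 2) * exp (-δ * n) * ∑' k, g k := by
        rw [← Finset.mul_sum]
        gcongr
        exact sum_Icc_one_sub_le_tsum hg (fun k ↦ (hg_pos k).le) hmn.le
    _ = K * (∑' k, g k) * (n : ℝ) ^ (α - β / 2) * exp (-δ * n) := by ring

/-- Lemma A.2: discrete Gaussian summation estimate. -/
theorem stmt18 (α β γ δ : ℝ) (hγ : 1 < γ) (hδ : 0 < δ) (ℓ : ℕ) (hℓ : 2 ≤ ℓ) :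
    ∃ C : ℝ, 0 < C ∧
      ∀ n : ℕ, ℓ < n →
        (∑ p ∈ Finset.Icc 1 (n - ℓ),
            (p : ℝ) ^ α * (Real.sqrt n - Real.sqrt p) ^ β *
              Real.exp
                (-δ * (Real.sqrt p + Real.sqrt γ * (Real.sqrt n - Real.sqrt ((p : ℝ) + 1))) ^ 2)) ≤
          C * (n : ℝ) ^ (α - β / 2) * Real.exp (-δ * n) := by
  obtain ⟨C, hC, hbound⟩ := stmt18_general α β γ δ hγ hδ
  exact ⟨C, hC, fun n hn ↦ hbound (n - ℓ) n (by omega)⟩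

end
end
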